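/- Let 4 ≤ p < q, n = p + q, and suppose 2p = q + 4. Then D_{p,q}^{0,1} ≺_s B_{p,q}^{2,0} ≺_s B_{p,q}^{0,1} ≺_s B_{p,q}^{0,0}, and every tree T ∈ 𝒯_n^{p,q} isomorphic to none of these four trees satisfies T ≺_s D_{p,q}^{0,1}; that is, the last four trees in the S-order among 𝒯_n^{p,q} are D_{p,q}^{0,1}, B_{p,q}^{2,0}, B_{p,q}^{0,1}, B_{p,q}^{0,0}. -/

import Mathlib

open SimpleGraph

open scoped Classical in
/-- The adjacency matrix of a simple graph, with real entries. -/
noncomputable def adjMat {V : Type*} [Fintype V] (G : SimpleGraph V) : Matrix V V ℝ :=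
  Matrix.of fun a b => if G.Adj a b then 1 else 0

/-- The `k`-th spectral moment `S_k(G) = tr(A(G)^k)`. -/
noncomputable def spectralMoment {V : Type*} [Fintype V] [DecidableEq V]
    (G : SimpleGraph V) (k : ℕ) : ℝ :=
  Matrix.trace (adjMat G ^ k)

/-- `SLt G₁ G₂` means `G₁ ≺_s G₂`: for some `k` with `1 ≤ k ≤ n - 1`,
`S_i(G₁) = S_i(G₂)` for all `i < k` and `S_k(G₁) < S_k(G₂)`. -/
def SLt {V : Type*} [Fintype V] [DecidableEq V] (G₁ G₂ : SimpleGraph V) : Prop :=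
  ∃ k : ℕ, 1 ≤ k ∧ k ≤ Fintype.card V - 1 ∧
    (∀ i < k, spectralMoment G₁ i = spectralMoment G₂ i) ∧
    spectralMoment G₁ k < spectralMoment G₂ k

/-- The tree `B_{p,q}^{k,l}` on `p + q` vertices: vertex `0 = u` is adjacent to `1 = v`
and to the `q - 1` vertices `2, …, q`; the distinguished neighbor `2` of `u` carries the
`k` pendant leaves `q+1, …, q+k`; the `l` neighbors `3, …, l+2` of `u` carry one pendant
leaf each (`q+k+j` is attached to `j+2` for `1 ≤ j ≤ l`); and `v` carries the
`p - k - l - 1` pendant leaves `q+k+l+1, …, p+q-1`. -/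
def BTree (p q k l : ℕ) : SimpleGraph (Fin (p + q)) :=
  SimpleGraph.fromRel (fun a b =>
    (a.val = 0 ∧ b.val = 1) ∨
    (a.val = 0 ∧ 2 ≤ b.val ∧ b.val ≤ q) ∨
    (a.val = 2 ∧ q + 1 ≤ b.val ∧ b.val ≤ q + k) ∨
    (q + k + 1 ≤ b.val ∧ b.val ≤ q + k + l ∧ a.val = b.val - (q + k) + 2) ∨
    (a.val = 1 ∧ q + k + l + 1 ≤ b.val))

/-- The tree `D_{p,q}^{k,l}` on `p + q` vertices: vertex `1 = v` is adjacent to `0 = u`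
and to the `p - 1` vertices `2, …, p`; the distinguished neighbor `2` of `v` carries the
`k` pendant leaves `p+1, …, p+k`; the `l` neighbors `3, …, l+2` of `v` carry one pendant
leaf each; and `u` carries the `q - k - l - 1` pendant leaves `p+k+l+1, …, p+q-1`. -/
def DTree (p q k l : ℕ) : SimpleGraph (Fin (p + q)) :=
  SimpleGraph.fromRel (fun a b =>
    (a.val = 0 ∧ b.val = 1) ∨
    (a.val = 1 ∧ 2 ≤ b.val ∧ b.val ≤ p) ∨
    (a.val = 2 ∧ p + 1 ≤ b.val ∧ b.val ≤ p + k) ∨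
    (p + k + 1 ≤ b.val ∧ b.val ≤ p + k + l ∧ a.val = b.val - (p + k) + 2) ∨
    (a.val = 0 ∧ p + k + l + 1 ≤ b.val))

/-- `T ∈ 𝒯_{p+q}^{p,q}`: `T` is a tree on `p + q` vertices with a `(p,q)`-bipartition. -/
def TreeBip (p q : ℕ) (G : SimpleGraph (Fin (p + q))) : Prop :=
  G.IsTree ∧ ∃ A : Finset (Fin (p + q)), A.card = p ∧
    ∀ ⦃x y : Fin (p + q)⦄, G.Adj x y → (x ∈ A ↔ y ∉ A)

/-! All trees on `n` vertices have the same second moment, and odd moments of bipartite graphs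
vanish, so trees are first compared by `S₄ = 2 ∑ (deg x - 1)² + 4 n - 6`. In a tree with bipartition
`s ∪ t` the numbers `deg x - 1` sum to `|t| - 1` over `s` and to `|s| - 1` over `t`, so their sum of
squares is large only if almost all of each sum sits at one vertex. When `q + 4 ≤ 2 p`, a tree whose
`S₄` is at least that of `D^{0,1}` has at most three vertices of degree greater than one: it is a
centre with `a` pendant leaves and two further neighbors carrying `b` and `c` leaves. Up to
isomorphism only `D^{0,1}`, `B^{0,0}`, `B^{0,1}` and `B^{2,0}` remain.

The moments of such a tree are traces of powers of a `6 × 6` matrix, because the tree is a blow-up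
of a fixed tree on six vertices. When `2 p = q + 4`, the trees `D^{0,1}` and `B^{2,0}` have the same
`S₄`, and `S₆` separates them. -/

section SpectralMoments

variable {V : Type*} [Fintype V]

theorem adjMat_eq_adjMatrix (G : SimpleGraph V) [DecidableRel G.Adj] :
    adjMat G = G.adjMatrix ℝ := by
  ext x y
  simp [adjMat, adjMatrix_apply]

theorem degree_sub_one_add_one_of_isTree [Nontrivial V] {G : SimpleGraph V}
    [DecidableRel G.Adj] (hG : G.IsTree) (x : V) : G.degree x - 1 + 1 = G.degree x :=
  Nat.sub_add_cancel (hG.connected.preconnected.degree_pos_of_nontrivial x)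

variable [DecidableEq V] {G : SimpleGraph V}

theorem spectralMoment_zero (G : SimpleGraph V) : spectralMoment G 0 = Fintype.card V := by
  simp [spectralMoment]

theorem spectralMoment_two (G : SimpleGraph V) [DecidableRel G.Adj] :
    spectralMoment G 2 = 2 * (G.edgeFinset.card : ℝ) := by
  rw [spectralMoment, adjMat_eq_adjMatrix, sq, Matrix.trace]
  simp only [Matrix.diag_apply, adjMatrix_mul_self_apply_self]
  exact_mod_cast G.sum_degrees_eq_twice_card_edges

theorem spectralMoment_eq_zero_of_odd (hG : G.IsBipartite) {k : ℕ} (hk : Odd k) :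
    spectralMoment G k = 0 := by
  classical
  have hc : G.Coloring Bool := hG.toColoring (by simp)
  rw [spectralMoment, adjMat_eq_adjMatrix, Matrix.trace]
  refine Finset.sum_eq_zero fun x _ => ?_
  rw [Matrix.diag_apply, adjMatrix_pow_apply_eq_card_walk, Nat.cast_eq_zero,
    Fintype.card_eq_zero_iff]
  refine ⟨fun ⟨w, hw⟩ => ?_⟩
  have hodd : Odd w.length := hw ▸ hk
  exact Nat.not_even_iff_odd.mpr hodd ((hc.even_length_iff_congr w).mpr Iff.rfl)

theorem sum_adjMatrix_sq_apply (G : SimpleGraph V) [DecidableRel G.Adj] :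
    ∑ x, ∑ y, (G.adjMatrix ℝ ^ 2) x y = ∑ z, (G.degree z : ℝ) ^ 2 := by
  have h : (1 : V → ℝ) ⬝ᵥ (G.adjMatrix ℝ ^ 2).mulVec 1 = ∑ z, (G.degree z : ℝ) ^ 2 := by
    rw [sq, ← Matrix.mulVec_mulVec, Matrix.dotProduct_mulVec]
    simp [dotProduct, sq]
  simpa [dotProduct, Matrix.mulVec] using h

theorem adjMatrix_sq_apply_mul_self [DecidableRel G.Adj] {x y : V}
    (h : (G.commonNeighbors x y).Subsingleton) :
    (G.adjMatrix ℝ ^ 2) x y * (G.adjMatrix ℝ ^ 2) x y = (G.adjMatrix ℝ ^ 2) x y := by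
  let N : Finset V := {z | G.Adj y z ∧ G.Adj x z}
  have hentry : (G.adjMatrix ℝ ^ 2) x y = (N.card : ℝ) := by
    simp [N, sq, neighborFinset_eq_filter, Finset.filter_filter]
  have hcard : N.card ≤ 1 := Finset.card_le_one.mpr fun z hz w hw => by
    simp only [N, Finset.mem_filter_univ] at hz hw
    exact h hz.symm hw.symm
  rw [hentry]
  interval_cases N.card <;> norm_num

/-- The condition on common neighbors says that `G` has no cycle of length four. -/
theorem spectralMoment_four [DecidableRel G.Adj]
    (hG : ∀ ⦃x y⦄, x ≠ y → (G.commonNeighbors x y).Subsingleton) :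
    spectralMoment G 4 = 2 * ∑ x, (G.degree x : ℝ) ^ 2 - ∑ x, (G.degree x : ℝ) := by
  have hentry (x y : V) : (G.adjMatrix ℝ ^ 2) x y * (G.adjMatrix ℝ ^ 2) y x =
      (G.adjMatrix ℝ ^ 2) x y + if x = y then (G.degree x : ℝ) ^ 2 - G.degree x else 0 := by
    split_ifs with h
    · subst h
      rw [sq (G.adjMatrix ℝ), adjMatrix_mul_self_apply_self]
      ring
    · rw [(G.isSymm_adjMatrix.pow 2).apply x y, adjMatrix_sq_apply_mul_self (hG h), add_zero]
  rw [spectralMoment, adjMat_eq_adjMatrix, show 4 = 2 + 2 from rfl, pow_add]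
  simp only [Matrix.trace, Matrix.diag_apply, Matrix.mul_apply (M := _ ^ 2), hentry,
    Finset.sum_add_distrib, sum_adjMatrix_sq_apply, Finset.sum_ite_eq, Finset.mem_univ, if_true,
    Finset.sum_sub_distrib]
  ring

theorem subsingleton_commonNeighbors_of_isAcyclic {V : Type*} {G : SimpleGraph V}
    (hG : G.IsAcyclic) {x y : V} (hxy : x ≠ y) : (G.commonNeighbors x y).Subsingleton := by
  intro z hz w hw
  obtain ⟨hxz, hyz⟩ := G.mem_commonNeighbors.mp hz
  obtain ⟨hxw, hyw⟩ := G.mem_commonNeighbors.mp hw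
  have hz : (Walk.cons hxz hyz.symm.toWalk).IsPath := by simp [hxz.ne, hyz.ne', hxy]
  have hw : (Walk.cons hxw hyw.symm.toWalk).IsPath := by simp [hxw.ne, hyw.ne', hxy]
  have := congrArg (fun P : G.Path x y => P.1.snd)
    ((hG.subsingleton_path x y).elim ⟨_, hz⟩ ⟨_, hw⟩)
  simpa using this

theorem spectralMoment_two_of_isTree (hG : G.IsTree) :
    spectralMoment G 2 = 2 * (Fintype.card V - 1 : ℝ) := by
  classical
  have hedges : (G.edgeFinset.card : ℝ) + 1 = Fintype.card V := by
    exact_mod_cast hG.card_edgeFinset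
  rw [spectralMoment_two, ← hedges, add_sub_cancel_right]

theorem spectralMoment_four_of_isTree [Nontrivial V] [DecidableRel G.Adj] (hG : G.IsTree) :
    spectralMoment G 4 =
      2 * ∑ x, ((G.degree x - 1 : ℕ) : ℝ) ^ 2 + 4 * Fintype.card V - 6 := by
  have hdegree (x : V) : ((G.degree x - 1 : ℕ) : ℝ) = G.degree x - 1 := by
    rw [← degree_sub_one_add_one_of_isTree hG x]
    simp
  have hsum : ∑ x, (G.degree x : ℝ) = 2 * (Fintype.card V - 1 : ℝ) := by
    rw [← spectralMoment_two_of_isTree hG, spectralMoment_two]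
    exact_mod_cast G.sum_degrees_eq_twice_card_edges
  rw [spectralMoment_four fun _ _ => subsingleton_commonNeighbors_of_isAcyclic hG.isAcyclic]
  simp only [hdegree, sub_sq, Finset.sum_add_distrib, Finset.sum_sub_distrib, mul_one,
    ← Finset.mul_sum, hsum]
  simp
  ring

end SpectralMoments

namespace SLt

variable {V : Type*} [Fintype V] [DecidableEq V] {G H : SimpleGraph V}

theorem of_isBipartite {k : ℕ} (hG : G.IsBipartite) (hH : H.IsBipartite) (hk : 1 ≤ k)
    (hkV : 2 * k < Fintype.card V)
    (heq : ∀ i < k, spectralMoment G (2 * i) = spectralMoment H (2 * i))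
    (hlt : spectralMoment G (2 * k) < spectralMoment H (2 * k)) : SLt G H := by
  refine ⟨2 * k, by omega, by omega, fun i hi => ?_, hlt⟩
  obtain ⟨j, rfl | rfl⟩ := i.even_or_odd'
  · exact heq j (by omega)
  · rw [spectralMoment_eq_zero_of_odd hG (odd_two_mul_add_one j),
      spectralMoment_eq_zero_of_odd hH (odd_two_mul_add_one j)]

theorem of_spectralMoment_four_lt (hG : G.IsBipartite) (hH : H.IsBipartite)
    (hV : 4 < Fintype.card V) (h2 : spectralMoment G 2 = spectralMoment H 2)
    (h4 : spectralMoment G 4 < spectralMoment H 4) : SLt G H := by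
  refine of_isBipartite (k := 2) hG hH one_le_two hV (fun i hi => ?_) h4
  interval_cases i
  · simp only [mul_zero, spectralMoment_zero]
  · exact h2

theorem of_spectralMoment_six_lt (hG : G.IsBipartite) (hH : H.IsBipartite)
    (hV : 6 < Fintype.card V) (h2 : spectralMoment G 2 = spectralMoment H 2)
    (h4 : spectralMoment G 4 = spectralMoment H 4)
    (h6 : spectralMoment G 6 < spectralMoment H 6) : SLt G H := by
  refine of_isBipartite (k := 3) hG hH (by norm_num) hV (fun i hi => ?_) h6
  interval_cases i
  · simp only [mul_zero, spectralMoment_zero]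
  · exact h2
  · exact h4

end SLt

section Blowup

variable {V V' W : Type*}

/-- `G` is obtained from `H` by replacing each vertex `i` of `H` by `n i` independent twins. The
witness `κ` sends a vertex of `G` to the vertex of `H` it is a copy of. -/
def IsBlowup (G : SimpleGraph V) (H : SimpleGraph W) (n : W → ℕ) : Prop :=
  ∃ κ : V → W, G = H.comap κ ∧ ∀ i, (κ ⁻¹' {i}).ncard = n i

variable {G : SimpleGraph V} {G' : SimpleGraph V'} {H : SimpleGraph W} {n : W → ℕ}

theorem IsBlowup.nonempty_iso [Finite V] [Finite V'] (hG : IsBlowup G H n)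
    (hG' : IsBlowup G' H n) : Nonempty (G ≃g G') := by
  obtain ⟨κ, rfl, hκ⟩ := hG
  obtain ⟨μ, rfl, hμ⟩ := hG'
  have hfiber (i : W) : Nonempty ({x // κ x = i} ≃ {y // μ y = i}) :=
    Finite.card_eq.mp ((hκ i).trans (hμ i).symm)
  let e (i : W) := (hfiber i).some
  let σ : V ≃ V' := (Equiv.sigmaFiberEquiv κ).symm.trans
    ((Equiv.sigmaCongrRight e).trans (Equiv.sigmaFiberEquiv μ))
  have hσ (x : V) : μ (σ x) = κ x := (e (κ x) ⟨x, rfl⟩).2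
  exact ⟨⟨σ, by simp only [comap_adj, hσ, implies_true]⟩⟩

theorem IsBlowup.isBipartite (hG : IsBlowup G H n) (hH : H.IsBipartite) : G.IsBipartite := by
  obtain ⟨κ, rfl, -⟩ := hG
  exact Colorable.of_hom ⟨κ, id⟩ hH

theorem trace_mul_pow_succ_comm {R m n : Type*} [CommSemiring R] [Fintype m] [Fintype n]
    [DecidableEq m] [DecidableEq n] (P : Matrix m n R) (Q : Matrix n m R) (k : ℕ) :
    ((P * Q) ^ (k + 1)).trace = ((Q * P) ^ (k + 1)).trace := by
  have hpow : (P * Q) ^ (k + 1) = P * ((Q * P) ^ k * Q) := by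
    induction k with
    | zero => simp
    | succ k ih => simp only [pow_succ _ (k + 1), ih, pow_succ (Q * P), Matrix.mul_assoc]
  rw [hpow, Matrix.trace_mul_comm, Matrix.mul_assoc, ← pow_succ]

theorem IsBlowup.spectralMoment_succ [Fintype V] [DecidableEq V] [Fintype W] [DecidableEq W]
    (hG : IsBlowup G H n) (k : ℕ) :
    spectralMoment G (k + 1) =
      ((Matrix.diagonal (fun i => (n i : ℝ)) * adjMat H) ^ (k + 1)).trace := by
  obtain ⟨κ, rfl, hκ⟩ := hG
  let P : Matrix V W ℝ := (adjMat H).submatrix κ id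
  let Q : Matrix W V ℝ := (1 : Matrix W W ℝ).submatrix id κ
  have hPQ : adjMat (H.comap κ) = P * Q := by
    ext x y
    have hentry : (P * Q) x y = adjMat H (κ x) (κ y) := by
      simp [P, Q, Matrix.mul_apply, Matrix.one_apply]
    exact hentry.symm
  have hQP : Q * P = Matrix.diagonal (fun i => (n i : ℝ)) * adjMat H := by
    ext i j
    have hfiber : ((Finset.univ.filter fun x => i = κ x).card : ℝ) = n i := by
      rw [← hκ, ← Set.ncard_coe_finset]
      congr 2
      ext x
      simp [eq_comm]
    have hentry (x : V) : Q i x * P x j = if i = κ x then adjMat H i j else 0 := by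
      by_cases h : i = κ x <;> simp [P, Q, Matrix.one_apply, h]
    simp only [Matrix.mul_apply (M := Q), hentry]
    rw [← Finset.sum_filter, Finset.sum_const, nsmul_eq_mul, hfiber, Matrix.diagonal_mul]
  rw [spectralMoment, hPQ, trace_mul_pow_succ_comm, hQP]

end Blowup

section TwoBranch

/-- The tree on six vertices with centre `0`, neighbors `1`, `2`, `3` of the centre, and leaves
`4` and `5` attached to `1` and `2`. -/
def twoBranchSkeleton : SimpleGraph (Fin 6) :=
  fromEdgeSet {s(0, 1), s(0, 2), s(0, 3), s(1, 4), s(2, 5)}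

instance : DecidableRel twoBranchSkeleton.Adj :=
  inferInstanceAs (DecidableRel (fromEdgeSet _).Adj)

theorem twoBranchSkeleton_adj (i j : Fin 6) : twoBranchSkeleton.Adj i j ↔
    i = 0 ∧ j = 1 ∨ i = 1 ∧ j = 0 ∨ i = 0 ∧ j = 2 ∨ i = 2 ∧ j = 0 ∨ i = 0 ∧ j = 3 ∨ i = 3 ∧ j = 0 ∨
    i = 1 ∧ j = 4 ∨ i = 4 ∧ j = 1 ∨ i = 2 ∧ j = 5 ∨ i = 5 ∧ j = 2 := by
  decide +revert

theorem twoBranchSkeleton_isBipartite : twoBranchSkeleton.IsBipartite :=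
  ⟨Coloring.mk ![0, 1, 1, 1, 0, 0] (by decide)⟩

/-- `G` is the tree of diameter at most four in which a centre has `a` pendant leaves and two
further neighbors, one carrying `b` pendant leaves and the other `c`. -/
def IsTwoBranch {V : Type*} (G : SimpleGraph V) (a b c : ℕ) : Prop :=
  IsBlowup G twoBranchSkeleton ![1, 1, 1, a, b, c]

/-- The quotient matrix of a two-branch tree: its spectral moments are those of the tree. -/
def twoBranchMatrix (a b c : ℝ) : Matrix (Fin 6) (Fin 6) ℝ :=
  !![0, 1, 1, 1, 0, 0; 1, 0, 0, 0, 1, 0; 1, 0, 0, 0, 0, 1;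
     a, 0, 0, 0, 0, 0; 0, b, 0, 0, 0, 0; 0, 0, c, 0, 0, 0]

theorem diagonal_mul_adjMat_twoBranchSkeleton (a b c : ℕ) :
    Matrix.diagonal (fun i => ((![1, 1, 1, a, b, c] : Fin 6 → ℕ) i : ℝ)) *
      adjMat twoBranchSkeleton = twoBranchMatrix a b c := by
  ext i j
  rw [adjMat_eq_adjMatrix, Matrix.diagonal_mul, adjMatrix_apply]
  fin_cases i <;> fin_cases j <;> simp [twoBranchSkeleton, twoBranchMatrix]

theorem twoBranchMatrix_sq (a b c : ℝ) : twoBranchMatrix a b c ^ 2 =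
    !![a + 2, 0, 0, 0, 1, 1; 0, b + 1, 1, 1, 0, 0; 0, 1, c + 1, 1, 0, 0;
       0, a, a, a, 0, 0; b, 0, 0, 0, b, 0; c, 0, 0, 0, 0, c] := by
  rw [sq]
  ext i j
  fin_cases i <;> fin_cases j <;>
    simp [twoBranchMatrix, Matrix.mul_apply, Fin.sum_univ_six] <;> ring

theorem twoBranchMatrix_cube (a b c : ℝ) : twoBranchMatrix a b c ^ 3 =
    !![0, a + b + 2, a + c + 2, a + 2, 0, 0; a + b + 2, 0, 0, 0, b + 1, 1;
       a + c + 2, 0, 0, 0, 1, c + 1; a * (a + 2), 0, 0, 0, a, a;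
       0, b * (b + 1), b, b, 0, 0; 0, c, c * (c + 1), c, 0, 0] := by
  rw [pow_succ, twoBranchMatrix_sq]
  ext i j
  fin_cases i <;> fin_cases j <;>
    simp [twoBranchMatrix, Matrix.mul_apply, Fin.sum_univ_six] <;> ring

namespace IsTwoBranch

variable {V W : Type*} {G : SimpleGraph V} {H : SimpleGraph W} {a b c : ℕ}

theorem isBipartite (hG : IsTwoBranch G a b c) : G.IsBipartite :=
  IsBlowup.isBipartite hG twoBranchSkeleton_isBipartite

theorem nonempty_iso [Finite V] [Finite W] (hG : IsTwoBranch G a b c)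
    (hH : IsTwoBranch H a b c) : Nonempty (G ≃g H) :=
  IsBlowup.nonempty_iso hG hH

variable [Fintype V] [DecidableEq V]

theorem spectralMoment_succ (hG : IsTwoBranch G a b c) (k : ℕ) :
    spectralMoment G (k + 1) = (twoBranchMatrix a b c ^ (k + 1)).trace := by
  rw [IsBlowup.spectralMoment_succ hG, diagonal_mul_adjMat_twoBranchSkeleton]

theorem spectralMoment_two (hG : IsTwoBranch G a b c) :
    spectralMoment G 2 = 2 * (a + b + c + 2) := by
  rw [hG.spectralMoment_succ 1, twoBranchMatrix_sq]
  simp [Matrix.trace, Fin.sum_univ_six]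
  ring

theorem spectralMoment_four (hG : IsTwoBranch G a b c) :
    spectralMoment G 4 =
      2 * ((a + 1) ^ 2 + b ^ 2 + c ^ 2) + 4 * (a + b + c) + 6 := by
  rw [hG.spectralMoment_succ 3, show 3 + 1 = 2 + 2 from rfl, pow_add, twoBranchMatrix_sq]
  simp [Matrix.trace, Fin.sum_univ_six]
  ring

theorem spectralMoment_six (hG : IsTwoBranch G a b c) :
    spectralMoment G 6 =
      2 * ((a + b + 2) ^ 2 + (a + 1) * b + ((a + c + 2) ^ 2 + (a + 1) * c) +
        a * (a + 2) ^ 2 + b * (b + 1) ^ 2 + c * (c + 1) ^ 2) := by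
  rw [hG.spectralMoment_succ 5, show 5 + 1 = 3 + 3 from rfl, pow_add, twoBranchMatrix_cube]
  simp [Matrix.trace, Fin.sum_univ_six]
  ring

end IsTwoBranch

end TwoBranch

section Recognition

theorem forall_adj_iff_eq_of_degree_eq_one {V : Type*} {G : SimpleGraph V} {x y : V}
    [Fintype (G.neighborSet x)] (hx : G.degree x = 1) (hxy : G.Adj x y) (z : V) :
    G.Adj x z ↔ z = y :=
  ⟨fun hxz => (degree_eq_one_iff_existsUnique_adj.mp hx).unique hxz hxy, fun h => h ▸ hxy⟩

variable {V : Type*} [Fintype V] {G : SimpleGraph V} [DecidableRel G.Adj]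

theorem eq_or_eq_of_degree_eq_one (hG : G.Preconnected) {x y : V} (hxy : G.Adj x y)
    (hx : G.degree x = 1) (hy : G.degree y = 1) (z : V) : z = x ∨ z = y := by
  by_contra hz
  obtain ⟨p⟩ := hG x z
  obtain ⟨d, -, hd, hd'⟩ := p.exists_boundary_dart {x, y} (Set.mem_insert x _) hz
  obtain hdx | hdy := hd
  · exact hd' (.inr ((forall_adj_iff_eq_of_degree_eq_one hx hxy _).mp (hdx ▸ d.adj)))
  · exact hd' (.inl ((forall_adj_iff_eq_of_degree_eq_one hy hxy.symm _).mp (hdy ▸ d.adj)))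

theorem exists_mem_forall_adj_iff_eq (hG : G.Preconnected) {s : Set V} (hs : s.Nonempty)
    (hleaf : ∀ x ∉ s, G.degree x = 1) {x : V} (hx : x ∉ s) :
    ∃ y ∈ s, ∀ z, G.Adj x z ↔ z = y := by
  obtain ⟨y, hxy, -⟩ := degree_eq_one_iff_existsUnique_adj.mp (hleaf x hx)
  refine ⟨y, ?_, forall_adj_iff_eq_of_degree_eq_one (hleaf x hx) hxy⟩
  by_contra hy
  obtain ⟨z, hz⟩ := hs
  obtain rfl | rfl := eq_or_eq_of_degree_eq_one hG hxy (hleaf x hx) (hleaf y hy) z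
  exacts [hx hz, hy hz]

/-- `u` is adjacent to the non-adjacent vertices `v` and `w`, and every other vertex is a leaf
attached to one of these three. -/
structure IsTwoBranchCore {V : Type*} (G : SimpleGraph V) (u v w : V) : Prop where
  adj_left : G.Adj u v
  adj_right : G.Adj u w
  ne : v ≠ w
  not_adj : ¬ G.Adj v w
  exists_adj_iff_eq : ∀ x ∉ ({u, v, w} : Set V), ∃ y ∈ ({u, v, w} : Set V), ∀ z, G.Adj x z ↔ z = y

open scoped Classical in
/-- The map to `twoBranchSkeleton` that exhibits a graph with core `u`, `v`, `w` as a blow-up. -/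
noncomputable def twoBranchLabel {V : Type*} (G : SimpleGraph V) (u v w x : V) : Fin 6 :=
  if x = u then 0 else if x = v then 1 else if x = w then 2 else
    if G.Adj u x then 3 else if G.Adj v x then 4 else 5

namespace IsTwoBranchCore

variable {V : Type*} {G : SimpleGraph V} {u v w x y : V}

theorem adj_of_notMem (h : IsTwoBranchCore G u v w) (hx : x ≠ u ∧ x ≠ v ∧ x ≠ w) :
    G.Adj u x ∨ G.Adj v x ∨ G.Adj w x := by
  obtain ⟨y, hy, hxy⟩ := h.exists_adj_iff_eq x (by simpa using hx)
  obtain rfl | rfl | rfl := hy <;> simp only [G.adj_comm _ x, hxy, true_or, or_true]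

theorem eq_of_adj_of_notMem (h : IsTwoBranchCore G u v w) (hx : x ≠ u ∧ x ≠ v ∧ x ≠ w)
    (hxy : G.Adj x y) : (y = u ∨ y = v ∨ y = w) ∧ ∀ z, G.Adj x z → z = y := by
  obtain ⟨y', hy', hxy'⟩ := h.exists_adj_iff_eq x (by simpa using hx)
  obtain rfl := (hxy' y).mp hxy
  exact ⟨hy', fun z => (hxy' z).mp⟩

theorem preimage_twoBranchLabel (h : IsTwoBranchCore G u v w) (i : Fin 6) :
    twoBranchLabel G u v w ⁻¹' {i} =
      ![{u}, {v}, {w}, G.neighborSet u \ {v, w}, G.neighborSet v \ {u},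
        G.neighborSet w \ {u}] i := by
  have hadj (x y : V) : G.Adj x y ↔ G.Adj y x := G.adj_comm x y
  have hirrefl (x : V) : ¬ G.Adj x x := G.irrefl
  have hexists (x : V) := h.adj_of_notMem (x := x)
  have hunique (x y : V) := h.eq_of_adj_of_notMem (x := x) (y := y)
  obtain ⟨huv, huw, hvw, hnvw, -⟩ := h
  ext x
  fin_cases i <;> simp [twoBranchLabel] <;> grind

theorem eq_comap_twoBranchLabel (h : IsTwoBranchCore G u v w) :
    G = twoBranchSkeleton.comap (twoBranchLabel G u v w) := by
  have hlabel (x : V) (i : Fin 6) := Set.ext_iff.mp (h.preimage_twoBranchLabel i) x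
  simp only [Set.mem_preimage, Set.mem_singleton_iff] at hlabel
  have hadj (x y : V) : G.Adj x y ↔ G.Adj y x := G.adj_comm x y
  have hunique (x y : V) := h.eq_of_adj_of_notMem (x := x) (y := y)
  obtain ⟨huv, huw, -, -, -⟩ := h
  ext x y
  simp only [comap_adj, twoBranchSkeleton_adj, hlabel, Nat.succ_eq_add_one, Nat.reduceAdd,
    Fin.isValue, Matrix.cons_val_zero, Matrix.cons_val_one, Matrix.cons_val,
    Set.mem_singleton_iff, Set.mem_sdiff, mem_neighborSet, Set.mem_insert_iff, not_or]
  refine ⟨fun hxy => ?_, by grind⟩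
  have hyx := hxy.symm
  by_cases hx : x ≠ u ∧ x ≠ v ∧ x ≠ w
  · have := hunique x y hx hxy
    grind
  by_cases hy : y ≠ u ∧ y ≠ v ∧ y ≠ w
  · have := hunique y x hy hyx
    grind
  · grind

theorem isTwoBranch [Fintype V] [DecidableRel G.Adj] (h : IsTwoBranchCore G u v w) :
    IsTwoBranch G (G.degree u - 2) (G.degree v - 1) (G.degree w - 1) := by
  classical
  refine ⟨twoBranchLabel G u v w, h.eq_comap_twoBranchLabel, fun i => ?_⟩
  have hncard (x : V) (s : Finset V) (hs : s ⊆ G.neighborFinset x) :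
      (G.neighborSet x \ s).ncard = G.degree x - s.card := by
    have hs' : (s : Set V) ⊆ G.neighborSet x := fun y hy => by simpa using hs hy
    rw [Set.ncard_sdiff hs', Set.ncard_coe_finset, ← card_neighborSet_eq_degree,
      Set.ncard_eq_toFinset_card', Set.toFinset_card]
  have hu := hncard u {v, w} (by simp [Finset.insert_subset_iff, h.adj_left, h.adj_right])
  have hv := hncard v {u} (by simp [h.adj_left.symm])
  have hw := hncard w {u} (by simp [h.adj_right.symm])
  rw [Finset.card_pair h.ne] at hu
  rw [h.preimage_twoBranchLabel]
  fin_cases i <;> simp_all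

end IsTwoBranchCore

end Recognition

section ExplicitTrees

theorem degree_eq_card_of_adj_iff_val_mem {N : ℕ} {G : SimpleGraph (Fin N)} [DecidableRel G.Adj]
    {x : Fin N} {S : Finset ℕ} (hS : S ⊆ Finset.range N) (h : ∀ y, G.Adj x y ↔ y.val ∈ S) :
    G.degree x = S.card := by
  rw [← card_neighborFinset_eq_degree, ← Finset.card_map Fin.valEmbedding]
  congr 1
  ext i
  simp only [Finset.mem_map, mem_neighborFinset, h, Fin.valEmbedding_apply]
  exact ⟨fun ⟨_, hy, hyi⟩ => hyi ▸ hy, fun hi => ⟨⟨i, Finset.mem_range.mp (hS hi)⟩, hi, rfl⟩⟩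

theorem isTwoBranch_of_adj_iff_val {N a b c u v w s t : ℕ} {G : SimpleGraph (Fin N)}
    (hu : u < s) (hv : v < s) (hw : w < s) (huv : u ≠ v) (huw : u ≠ w) (hvw : v ≠ w)
    (hs : s = a + 3) (ht : t = s + c) (hN : N = t + b)
    (hG : ∀ x y : Fin N, G.Adj x y ↔
      (x.val = u ∧ y.val < s ∧ y.val ≠ u ∨ x.val = v ∧ t ≤ y.val ∨
        x.val = w ∧ s ≤ y.val ∧ y.val < t) ∨
      (y.val = u ∧ x.val < s ∧ x.val ≠ u ∨ y.val = v ∧ t ≤ x.val ∨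
        y.val = w ∧ s ≤ x.val ∧ x.val < t)) :
    IsTwoBranch G a b c := by
  classical
  obtain ⟨⟨u, rfl⟩, ⟨v, rfl⟩, ⟨w, rfl⟩⟩ : (∃ x : Fin N, x.val = u) ∧ (∃ x : Fin N, x.val = v) ∧
      ∃ x : Fin N, x.val = w :=
    ⟨⟨⟨u, by omega⟩, rfl⟩, ⟨⟨v, by omega⟩, rfl⟩, ⟨⟨w, by omega⟩, rfl⟩⟩
  have hdu : G.degree u = ((Finset.range s).erase u.val).card :=
    degree_eq_card_of_adj_iff_val_mem (by intro i; simp; omega) fun y => by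
      simp only [hG, true_and, Finset.mem_erase, Finset.mem_range]
      omega
  have hdv : G.degree v = (insert u.val (Finset.Ico t N)).card :=
    degree_eq_card_of_adj_iff_val_mem (by intro i; simp; omega) fun y => by
      simp only [hG, true_and, Finset.mem_insert, Finset.mem_Ico]
      omega
  have hdw : G.degree w = (insert u.val (Finset.Ico s t)).card :=
    degree_eq_card_of_adj_iff_val_mem (by intro i; simp; omega) fun y => by
      simp only [hG, true_and, Finset.mem_insert, Finset.mem_Ico]
      omega
  rw [Finset.card_erase_of_mem (by simpa using hu), Finset.card_range] at hdu
  rw [Finset.card_insert_of_notMem (by simp; omega), Nat.card_Ico] at hdv hdw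
  have hcore : IsTwoBranchCore G u v w := by
    refine ⟨by grind, by grind, by grind, by grind, fun x hx => ?_⟩
    simp only [Set.mem_insert_iff, Set.mem_singleton_iff, not_or, hG, Fin.ext_iff] at hx ⊢
    obtain hxs | hxt | hxst : x.val < s ∨ t ≤ x.val ∨ s ≤ x.val ∧ x.val < t := by omega
    · exact ⟨u, .inl rfl, fun z => by omega⟩
    · exact ⟨v, .inr (.inl rfl), fun z => by omega⟩
    · exact ⟨w, .inr (.inr rfl), fun z => by omega⟩
  convert hcore.isTwoBranch <;> omega

variable {p q k : ℕ}

theorem isTwoBranch_BTree (hq : 2 ≤ q) (hk : k + 1 ≤ p) :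
    IsTwoBranch (BTree p q k 0) (q - 2) (p - 1 - k) k := by
  apply isTwoBranch_of_adj_iff_val (u := 0) (v := 1) (w := 2) (s := q + 1) (t := q + k + 1)
  case hG =>
    intro x y
    simp only [BTree, fromRel_adj, ne_eq, Fin.ext_iff]
    omega
  all_goals omega

theorem isTwoBranch_BTree_zero_one (hq : 3 ≤ q) (hp : 2 ≤ p) :
    IsTwoBranch (BTree p q 0 1) (q - 2) (p - 2) 1 := by
  apply isTwoBranch_of_adj_iff_val (u := 0) (v := 1) (w := 3) (s := q + 1) (t := q + 2)
  case hG =>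
    intro x y
    simp only [BTree, fromRel_adj, ne_eq, Fin.ext_iff]
    omega
  all_goals omega

theorem isTwoBranch_DTree_zero_one (hp : 3 ≤ p) (hq : 2 ≤ q) :
    IsTwoBranch (DTree p q 0 1) (p - 2) (q - 2) 1 := by
  apply isTwoBranch_of_adj_iff_val (u := 1) (v := 0) (w := 3) (s := p + 1) (t := p + 2)
  case hG =>
    intro x y
    simp only [DTree, fromRel_adj, ne_eq, Fin.ext_iff]
    omega
  all_goals omega

end ExplicitTrees

section SumSquares

variable {ι : Type*} {s : Finset ι}

theorem sum_sq_le_sq_add_sq_sub {R : Type*} [CommRing R] [LinearOrder R] [IsStrictOrderedRing R]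
    {f : ι → R} {i : ι} (hf : ∀ x ∈ s, 0 ≤ f x) (hi : i ∈ s) :
    ∑ x ∈ s, f x ^ 2 ≤ f i ^ 2 + (∑ x ∈ s, f x - f i) ^ 2 := by
  classical
  rw [← Finset.add_sum_erase s f hi, add_sub_cancel_left, ← Finset.add_sum_erase s (f · ^ 2) hi]
  gcongr
  exact Finset.sum_sq_le_sq_sum_of_nonneg fun x hx => hf x (Finset.mem_of_mem_erase hx)

theorem exists_sum_le_add_of_sq_le_sum_sq {R : Type*} [CommRing R] [LinearOrder R]
    [IsStrictOrderedRing R] {f : ι → R} {j : R} (hs : s.Nonempty) (hf : ∀ x ∈ s, 0 ≤ f x)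
    (h : (∑ x ∈ s, f x - j) ^ 2 + j ^ 2 ≤ ∑ x ∈ s, f x ^ 2) :
    ∃ i ∈ s, ∑ x ∈ s, f x ≤ f i + j := by
  obtain ⟨i, hi, hmax⟩ := s.exists_max_image f hs
  refine ⟨i, hi, ?_⟩
  by_contra! hlt
  have hsq := sum_sq_le_sq_add_sq_sub hf hi
  have hmul : ∑ x ∈ s, f x ^ 2 ≤ f i * ∑ x ∈ s, f x := by
    rw [Finset.mul_sum]
    refine Finset.sum_le_sum fun x hx => ?_
    rw [sq]
    exact mul_le_mul_of_nonneg_right (hmax x hx) (hf x hx)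
  obtain hle | hgt := le_or_gt (∑ x ∈ s, f x - f i) (f i)
  · have : 0 < (f i - j) * (∑ x ∈ s, f x - f i - j) := mul_pos (by linarith) (by linarith)
    nlinarith
  · nlinarith [hf i hi, sq_nonneg (∑ x ∈ s, f x - 2 * j)]

theorem exists_pair_of_sq_le_sum_sq {f : ι → ℕ} {j : ℕ} (hj : j ≤ 2) (hs : 2 ≤ s.card)
    (h : ((∑ i ∈ s, f i : ℕ) - j : ℤ) ^ 2 + (j : ℤ) ^ 2 ≤ ∑ i ∈ s, (f i : ℤ) ^ 2) :
    ∃ r ≤ j, ∃ u ∈ s, ∃ w ∈ s, u ≠ w ∧ f u + r = ∑ i ∈ s, f i ∧ f w = r := by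
  classical
  obtain ⟨u, hu, hju⟩ := exists_sum_le_add_of_sq_le_sum_sq (s := s)
    (f := fun i => (f i : ℤ)) (j := j)
    (Finset.card_pos.mp (by omega)) (by simp) (by exact_mod_cast h)
  have hsum := Finset.add_sum_erase s f hu
  have hsumsq := Finset.add_sum_erase s (fun i => (f i : ℤ) ^ 2) hu
  set r := ∑ i ∈ s.erase u, f i with hr
  have hrj : r ≤ j := by
    have : ∑ i ∈ s, f i ≤ f u + j := by exact_mod_cast hju
    omega
  have hrsq : (r : ℤ) ^ 2 ≤ ∑ i ∈ s.erase u, (f i : ℤ) ^ 2 := by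
    obtain hr1 | hrj' : r ≤ 1 ∨ r = j := by omega
    · calc (r : ℤ) ^ 2 = ∑ i ∈ s.erase u, (f i : ℤ) := by
            rw [← Nat.cast_sum, ← hr]
            interval_cases r <;> rfl
        _ ≤ ∑ i ∈ s.erase u, (f i : ℤ) ^ 2 :=
            Finset.sum_le_sum fun i _ => by exact_mod_cast Nat.le_self_pow two_ne_zero (f i)
    · rw [← hsum, ← hrj'] at h
      push_cast [add_sub_cancel_right] at h
      linarith
  obtain ⟨w, hw, hrw⟩ := exists_sum_le_add_of_sq_le_sum_sq (s := s.erase u) (j := 0)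
    (f := fun i => (f i : ℤ))
    (Finset.card_pos.mp (by rw [Finset.card_erase_of_mem hu]; omega)) (by simp)
    (by simpa [r] using hrsq)
  have hrw' : r ≤ f w := by simpa [r] using mod_cast hrw
  refine ⟨r, hrj, u, hu, w, Finset.mem_of_mem_erase hw, (Finset.ne_of_mem_erase hw).symm, hsum, ?_⟩
  exact (Finset.single_le_sum_of_canonicallyOrdered hw).antisymm hrw'

end SumSquares

section BipartiteTrees

variable {V : Type*} [Fintype V] {G : SimpleGraph V} [DecidableRel G.Adj]

theorem sum_degree_sub_one_add_card_of_isTree [Nontrivial V] (hG : G.IsTree) (s : Finset V) :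
    ∑ x ∈ s, (G.degree x - 1) + s.card = ∑ x ∈ s, G.degree x := by
  simp only [Finset.card_eq_sum_ones, ← Finset.sum_add_distrib,
    degree_sub_one_add_one_of_isTree hG]

theorem isTwoBranchCore_of_isTree (hG : G.IsTree) {u v w : V} (huv : G.Adj u v)
    (huw : G.Adj u w) (hvw : v ≠ w)
    (hdeg : G.degree u + G.degree v + G.degree w = Fintype.card V + 1) :
    IsTwoBranchCore G u v w := by
  classical
  have : Nontrivial V := ⟨v, w, hvw⟩
  refine ⟨huv, huw, hvw, fun h => ?_, fun x hx => exists_mem_forall_adj_iff_eq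
    hG.connected.preconnected (Set.insert_nonempty u _) (fun y hy => ?_) hx⟩
  · obtain ⟨C⟩ := hG.isAcyclic.isBipartite
    have := C.valid huv
    have := C.valid huw
    have := C.valid h
    omega
  · have hedge := hG.card_edgeFinset
    have hsum := sum_degree_sub_one_add_card_of_isTree hG Finset.univ
    rw [sum_degrees_eq_twice_card_edges, Finset.card_univ] at hsum
    have hcore := sum_degree_sub_one_add_card_of_isTree hG {u, v, w}
    rw [Finset.card_eq_three.mpr ⟨u, v, w, huv.ne, huw.ne, hvw, rfl⟩] at hcore
    have hsplit := Finset.sum_sdiff (f := fun x => G.degree x - 1) (Finset.subset_univ {u, v, w})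
    have hzero : ∑ x ∈ Finset.univ \ {u, v, w}, (G.degree x - 1) = 0 := by
      rw [Finset.sum_insert (f := fun x => G.degree x) (by simp [huv.ne, huw.ne]),
        Finset.sum_pair (f := fun x => G.degree x) hvw] at hcore
      omega
    rw [← degree_sub_one_add_one_of_isTree hG y,
      Finset.sum_eq_zero_iff.mp hzero y (by simpa using hy)]

variable {s t : Finset V}

theorem card_add_card_of_isCompl (hst : IsCompl s t) : s.card + t.card = Fintype.card V := by
  classical
  rw [← hst.compl_eq, Finset.card_add_card_compl]

theorem sum_degree_sub_one_add_one_of_isBipartiteWith [Nontrivial V] (hG : G.IsTree)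
    (hst : IsCompl s t) (h : G.IsBipartiteWith s t) :
    ∑ x ∈ s, (G.degree x - 1) + 1 = t.card := by
  have hedge := hG.card_edgeFinset
  have hsum := sum_degree_sub_one_add_card_of_isTree hG s
  have hcard := card_add_card_of_isCompl hst
  rw [isBipartiteWith_sum_degrees_eq_card_edges h] at hsum
  omega

theorem adj_of_degree_eq_card (h : G.IsBipartiteWith s t) {u v : V} (hu : u ∈ s)
    (hdeg : G.degree u = t.card) (hv : v ∈ t) : G.Adj u v := by
  rw [← mem_neighborFinset, Finset.eq_of_subset_of_card_le
    (isBipartiteWith_neighborFinset_subset h hu) hdeg.ge]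
  exact hv

theorem isTwoBranch_of_isBipartiteWith (hG : G.IsTree) (hst : IsCompl s t)
    (h : G.IsBipartiteWith s t) {u v w : V} (hu : u ∈ s) (hv : v ∈ t) (hw : w ∈ t) (hvw : v ≠ w)
    (hdu : G.degree u = t.card) (hdvw : G.degree v + G.degree w = s.card + 1) :
    IsTwoBranch G (t.card - 2) (G.degree v - 1) (G.degree w - 1) := by
  rw [← hdu]
  have hcard := card_add_card_of_isCompl hst
  exact (isTwoBranchCore_of_isTree hG (adj_of_degree_eq_card h hu hdu hv)
    (adj_of_degree_eq_card h hu hdu hw) hvw (by omega)).isTwoBranch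

theorem exists_isTwoBranch_of_degree_eq_card (hG : G.IsTree) (hst : IsCompl s t)
    (h : G.IsBipartiteWith s t) {u : V} (hu : u ∈ s) (hdu : G.degree u = t.card) (ht : 2 ≤ t.card)
    {j : ℕ} (hj : j ≤ 2)
    (hsq : (s.card - 1 - j : ℤ) ^ 2 + (j : ℤ) ^ 2 ≤ ∑ x ∈ t, ((G.degree x - 1 : ℕ) : ℤ) ^ 2) :
    ∃ r ≤ j, IsTwoBranch G (t.card - 2) (s.card - 1 - r) r := by
  obtain ⟨x, hx⟩ := Finset.card_pos.mp (by omega : 0 < t.card)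
  have : Nontrivial V := ⟨u, x, fun hux => Finset.disjoint_left.mp hst.disjoint hu (hux ▸ hx)⟩
  have hsum := sum_degree_sub_one_add_one_of_isBipartiteWith hG hst.symm h.symm
  obtain ⟨r, hr, v, hv, w, hw, hvw, hvr, hwr⟩ := exists_pair_of_sq_le_sum_sq
    (f := fun x => G.degree x - 1) hj ht
    (by rwa [← hsum, Nat.cast_succ, add_sub_cancel_right] at hsq)
  have hdv := degree_sub_one_add_one_of_isTree hG v
  have hdw := degree_sub_one_add_one_of_isTree hG w
  refine ⟨r, hr, ?_⟩
  convert isTwoBranch_of_isBipartiteWith hG hst h hu hv hw hvw hdu (by omega) using 1 <;> omega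

theorem isTwoBranch_or_exists_isTwoBranch (hG : G.IsTree) (hst : IsCompl s t)
    (h : G.IsBipartiteWith s t) (ht : 2 ≤ t.card) (hcard : t.card + 4 ≤ 2 * s.card)
    (hsq : (t.card - 2 : ℤ) ^ 2 + 1 + (s.card - 1 : ℤ) ^ 2 ≤
      ∑ x, ((G.degree x - 1 : ℕ) : ℤ) ^ 2) :
    IsTwoBranch G (s.card - 2) (t.card - 2) 1 ∨
      ∃ r ≤ 2, IsTwoBranch G (t.card - 2) (s.card - 1 - r) r := by
  classical
  have : Nontrivial V := Fintype.one_lt_card_iff_nontrivial.mp (ht.trans t.card_le_univ)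
  set e : V → ℕ := fun x => G.degree x - 1
  have hdeg (x : V) : e x + 1 = G.degree x := degree_sub_one_add_one_of_isTree hG x
  have hs1 : ∑ x ∈ s, e x + 1 = t.card := sum_degree_sub_one_add_one_of_isBipartiteWith hG hst h
  have ht1 : ∑ x ∈ t, e x + 1 = s.card :=
    sum_degree_sub_one_add_one_of_isBipartiteWith hG hst.symm h.symm
  have hsz : ∑ x ∈ s, (e x : ℤ) = t.card - 1 := by rw [← hs1]; push_cast; ring
  have htz : ∑ x ∈ t, (e x : ℤ) = s.card - 1 := by rw [← ht1]; push_cast; ring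
  have hsqt : ∑ x ∈ t, (e x : ℤ) ^ 2 ≤ (s.card - 1 : ℤ) ^ 2 :=
    htz ▸ Finset.sum_sq_le_sq_sum_of_nonneg (by simp)
  rw [← Finset.sum_add_sum_compl s, hst.compl_eq] at hsq
  obtain ⟨r, hr, u, hu, u', hu', huu', hur, hur'⟩ := exists_pair_of_sq_le_sum_sq (s := s) (f := e)
    one_le_two (by omega) (by push_cast; rw [hsz]; linarith)
  have hsqs := sum_sq_le_sq_add_sq_sub (f := fun x => (e x : ℤ)) (by simp) hu
  have heu : (e u : ℤ) = t.card - 1 - r := by omega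
  simp only [hsz, heu] at hsqs
  have hdu := hdeg u
  interval_cases r
  · right
    refine exists_isTwoBranch_of_degree_eq_card hG hst h hu (by omega) ht le_rfl ?_
    push_cast at hsqs ⊢
    nlinarith
  · left
    obtain ⟨v, hv, hev⟩ := exists_sum_le_add_of_sq_le_sum_sq (s := t) (f := fun x => (e x : ℤ))
      (j := 0) (Finset.card_pos.mp (by omega)) (by simp) (by push_cast at hsqs; rw [htz]; linarith)
    rw [htz] at hev
    have hvle : e v ≤ ∑ x ∈ t, e x := Finset.single_le_sum_of_canonicallyOrdered hv
    have hdv := hdeg v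
    have hdu' := hdeg u'
    convert isTwoBranch_of_isBipartiteWith hG hst.symm h.symm hv hu hu' huu' (by omega)
      (by omega) using 1 <;> omega

end BipartiteTrees

section Comparison

theorem IsTwoBranch.sLt_of_mul_lt_mul {V : Type*} [Fintype V] [DecidableEq V]
    {G H : SimpleGraph V} {a b c b' c' : ℕ} (hG : IsTwoBranch G a b c)
    (hH : IsTwoBranch H a b' c') (hV : 4 < Fintype.card V) (hadd : b + c = b' + c')
    (hmul : b' * c' < b * c) : SLt G H := by
  have hadd' : (b + c : ℝ) = b' + c' := by exact_mod_cast hadd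
  have hmul' : (b' * c' : ℝ) < b * c := by exact_mod_cast hmul
  refine SLt.of_spectralMoment_four_lt hG.isBipartite hH.isBipartite hV ?_ ?_
  · rw [hG.spectralMoment_two, hH.spectralMoment_two]
    linarith
  · rw [hG.spectralMoment_four, hH.spectralMoment_four]
    linear_combination 4 * hmul' + (2 * (b + c + b' + c' : ℝ) + 4) * hadd'

theorem IsTwoBranch.sLt_of_two_mul_eq_add_four {V : Type*} [Fintype V] [DecidableEq V]
    {G H : SimpleGraph V} {p q : ℕ} (hG : IsTwoBranch G (p - 2) (q - 2) 1)
    (hH : IsTwoBranch H (q - 2) (p - 3) 2) (hV : 6 < Fintype.card V) (hp : 5 ≤ p)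
    (hpq : 2 * p = q + 4) : SLt G H := by
  obtain ⟨m, rfl⟩ := Nat.exists_eq_add_of_le hp
  obtain rfl : q = 2 * m + 6 := by omega
  rw [show 5 + m - 2 = m + 3 by omega] at hG
  rw [show 5 + m - 3 = m + 2 by omega] at hH
  rw [Nat.add_sub_assoc (by norm_num)] at hG hH
  refine SLt.of_spectralMoment_six_lt hG.isBipartite hH.isBipartite hV ?_ ?_ ?_
  · rw [hG.spectralMoment_two, hH.spectralMoment_two]
    push_cast
    ring
  · rw [hG.spectralMoment_four, hH.spectralMoment_four]
    push_cast
    ring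
  · rw [hG.spectralMoment_six, hH.spectralMoment_six, ← sub_pos]
    push_cast
    ring_nf
    positivity

namespace TreeBip

variable {p q : ℕ} {T H : SimpleGraph (Fin (p + q))}

theorem exists_isBipartiteWith (hT : TreeBip p q T) : ∃ s t : Finset (Fin (p + q)),
    IsCompl s t ∧ s.card = p ∧ t.card = q ∧ T.IsBipartiteWith s t := by
  obtain ⟨-, s, hs, hadj⟩ := hT
  refine ⟨s, sᶜ, isCompl_compl, hs, by simp [Finset.card_compl, hs], ?_, fun x y hxy => ?_⟩
  · simpa using disjoint_compl_right
  · have := hadj hxy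
    simp only [Finset.mem_coe, Finset.mem_compl]
    tauto

theorem sLt_or_isTwoBranch (hT : TreeBip p q T) (hq : 2 ≤ q) (hpq : q + 4 ≤ 2 * p)
    (hH : IsTwoBranch H (p - 2) (q - 2) 1) :
    SLt T H ∨ IsTwoBranch T (p - 2) (q - 2) 1 ∨
      ∃ r ≤ 2, IsTwoBranch T (q - 2) (p - 1 - r) r := by
  classical
  have : Nontrivial (Fin (p + q)) := Fin.nontrivial_iff_two_le.mpr (by omega)
  have hV : (Fintype.card (Fin (p + q)) : ℝ) = p + q := by simp
  have hp2 : ((p - 2 : ℕ) : ℝ) = p - 2 := by rw [Nat.cast_sub (by omega)]; rfl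
  have hq2 : ((q - 2 : ℕ) : ℝ) = q - 2 := by rw [Nat.cast_sub (by omega)]; rfl
  obtain hlt | hle := lt_or_ge (spectralMoment T 4) (spectralMoment H 4)
  · refine .inl (SLt.of_spectralMoment_four_lt hT.1.isAcyclic.isBipartite hH.isBipartite
      (by rw [Fintype.card_fin]; omega) ?_ hlt)
    rw [spectralMoment_two_of_isTree hT.1, hH.spectralMoment_two, hV, hp2, hq2]
    push_cast
    ring
  · right
    obtain ⟨s, t, hst, hs, ht, h⟩ := hT.exists_isBipartiteWith
    have hclass := isTwoBranch_or_exists_isTwoBranch hT.1 hst h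
    rw [hs, ht] at hclass
    refine hclass hq hpq ?_
    rw [spectralMoment_four_of_isTree hT.1, hH.spectralMoment_four, hV, hp2, hq2] at hle
    have hsq : (q - 2 : ℝ) ^ 2 + 1 + (p - 1 : ℝ) ^ 2 ≤ ∑ x, ((T.degree x - 1 : ℕ) : ℝ) ^ 2 := by
      push_cast at hle
      linarith
    exact_mod_cast hsq

end TreeBip

end Comparison

/-- For `4 ≤ p < q`, `n = p + q` and `2p = q + 4`, one has
`D_{p,q}^{0,1} ≺_s B_{p,q}^{2,0} ≺_s B_{p,q}^{0,1} ≺_s B_{p,q}^{0,0}`, and every tree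
`T ∈ 𝒯_n^{p,q}` isomorphic to none of these four trees satisfies
`T ≺_s D_{p,q}^{0,1}`: the last four trees in the S-order among `𝒯_n^{p,q}` are
`D_{p,q}^{0,1}, B_{p,q}^{2,0}, B_{p,q}^{0,1}, B_{p,q}^{0,0}`. -/
theorem stmt_12 (p q : ℕ) (hp : 4 ≤ p) (hpq : p < q) (h : 2 * p = q + 4) :
    SLt (DTree p q 0 1) (BTree p q 2 0) ∧
    SLt (BTree p q 2 0) (BTree p q 0 1) ∧
    SLt (BTree p q 0 1) (BTree p q 0 0) ∧
    ∀ T : SimpleGraph (Fin (p + q)), TreeBip p q T →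
      ¬ Nonempty (T ≃g DTree p q 0 1) → ¬ Nonempty (T ≃g BTree p q 2 0) →
      ¬ Nonempty (T ≃g BTree p q 0 1) → ¬ Nonempty (T ≃g BTree p q 0 0) →
      SLt T (DTree p q 0 1) := by
  have hD : IsTwoBranch (DTree p q 0 1) (p - 2) (q - 2) 1 :=
    isTwoBranch_DTree_zero_one (by omega) (by omega)
  have hB (k : ℕ) (hk : k ≤ 2) : IsTwoBranch (BTree p q k 0) (q - 2) (p - 1 - k) k :=
    isTwoBranch_BTree (by omega) (by omega)
  have hB1 : IsTwoBranch (BTree p q 0 1) (q - 2) (p - 2) 1 :=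
    isTwoBranch_BTree_zero_one (by omega) (by omega)
  have hV : Fintype.card (Fin (p + q)) = p + q := Fintype.card_fin _
  refine ⟨hD.sLt_of_two_mul_eq_add_four (hB 2 le_rfl) (by omega) (by omega) h,
    (hB 2 le_rfl).sLt_of_mul_lt_mul hB1 (by omega) (by omega) (by omega),
    hB1.sLt_of_mul_lt_mul (hB 0 zero_le_two) (by omega) (by omega) (by omega),
    fun T hT hTD hTB2 hTB1 hTB0 => ?_⟩
  obtain hlt | hTD' | ⟨r, hr, hTB⟩ := hT.sLt_or_isTwoBranch (by omega) h.ge hD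
  · exact hlt
  · exact absurd (hTD'.nonempty_iso hD) hTD
  · interval_cases r
    · exact absurd (hTB.nonempty_iso (hB 0 zero_le_two)) hTB0
    · exact absurd (hTB.nonempty_iso hB1) hTB1
    · exact absurd (hTB.nonempty_iso (hB 2 le_rfl)) hTB2
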